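/- Let F be a finite field of odd order q, and define nmExt(x, y) = χ(x + y) where χ is the quadratic character of F. Then for any k, nmExt is a (k, ε)-non-malleable extractor with one-bit output, where ε = 2·q^{1/4}·2^{1-k/2} (i.e., ε = 4·q^{1/4}·2^{-k/2}), in the sense that for any source X on F with H_∞(X) ≥ k, Y uniform on F independent of X, and any A : F → F with A(y) ≠ y for all y, the distribution (χ(X+Y), χ(X+A(Y)), Y) is ε-close to (U, χ(X+A(Y)), Y) with U a uniform sign independent of the rest. -/

import Mathlib

open Finset
open scoped Classical

/-!
By a non-uniform XOR lemma for signs it suffices to bound `∑ y |∑ x μ(x) χ(x + y) χ(x + A y)ⁿ|` for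
`n = 0, 1`. Cauchy–Schwarz in `x` replaces `μ` by its collision probability, at most `2 ^ (-k)`, and
leaves the Gram matrix of the functions `x ↦ χ(x + y) χ(x + A y)ⁿ`. Its entry at `(y, y')` is a
complete sum of `χ` over the values of a polynomial of degree `2 n + 2`, which has `-y` as a simple
root unless `y ∈ {y', A y'}`, and so is not a constant times a square.

Such sums are `O(√q)` by Stepanov's method: a nonzero polynomial of small degree is built that
vanishes to order about `√q` at every point where `f ^ ((q - 1) / 2)` takes a prescribed nonzero
value. The resulting constants are good enough because the claim is trivial unless
`q ^ (1 / 4) * 2 ^ (-k / 2) < 1 / 4`, which forces `q ≥ 256`.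
-/

section HasseDerivative

open Polynomial

lemma pow_dvd_pow_mul_hasseDeriv_pow_mul {R : Type*} [CommRing R] (f u : R[X]) (n k : ℕ) :
    f ^ n ∣ f ^ k * hasseDeriv k (f ^ n * u) := by
  induction n generalizing k with
  | zero => simp
  | succ n ih =>
    have self_dvd (i : ℕ) : f ∣ f ^ i * hasseDeriv i f := by
      cases i with
      | zero => simp
      | succ i => exact (dvd_pow_self f i.succ_ne_zero).mul_right _
    rw [pow_succ', mul_assoc, hasseDeriv_mul, mul_sum]
    refine dvd_sum fun ij hij => ?_
    rw [← mem_antidiagonal.1 hij, pow_add, mul_mul_mul_comm]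
    exact mul_dvd_mul (self_dvd ij.1) (ih ij.2)

lemma X_sub_C_pow_dvd_iff_forall_eval_hasseDeriv {R : Type*} [CommRing R] {p : R[X]} {x : R}
    {l : ℕ} : (X - C x) ^ l ∣ p ↔ ∀ k < l, (hasseDeriv k p).eval x = 0 := by
  simp only [X_sub_C_pow_dvd_iff, X_pow_dvd_iff, ← taylor_apply, taylor_coeff]

variable {F : Type*} [Field F]

lemma card_mul_le_natDegree_of_forall_X_sub_C_pow_dvd {p : F[X]} (hp : p ≠ 0) {l : ℕ}
    {S : Finset F} (hS : ∀ x ∈ S, (X - C x) ^ l ∣ p) : #S * l ≤ p.natDegree := by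
  have prod_dvd : ∏ x ∈ S, (X - C x) ^ l ∣ p :=
    prod_dvd_of_coprime
      (fun _ _ _ _ hxy => (pairwise_coprime_X_sub_C Function.injective_id hxy).pow) hS
  have factor_ne_zero (x) (_ : x ∈ S) : (X - C x) ^ l ≠ 0 := pow_ne_zero l (X_sub_C_ne_zero x)
  simpa [natDegree_prod _ _ factor_ne_zero] using natDegree_le_of_dvd prod_dvd hp

lemma exists_linearMap_pow_mul_eq_pow_mul_hasseDeriv {f : F[X]} (hf : f ≠ 0) (n k : ℕ) :
    ∃ L : F[X] →ₗ[F] F[X], ∀ u, f ^ n * L u = f ^ k * hasseDeriv k (f ^ n * u) := by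
  have mul_injective : LinearMap.ker (LinearMap.mulLeft F (f ^ n)) = ⊥ :=
    LinearMap.ker_eq_bot.2 (mul_right_injective₀ (pow_ne_zero n hf))
  obtain ⟨g, hg⟩ := LinearMap.exists_leftInverse_of_injective _ mul_injective
  refine ⟨g ∘ₗ LinearMap.mulLeft F (f ^ k) ∘ₗ hasseDeriv k ∘ₗ LinearMap.mulLeft F (f ^ n),
    fun u => ?_⟩
  obtain ⟨w, hw⟩ := pow_dvd_pow_mul_hasseDeriv_pow_mul f u n k
  have g_mul : g (f ^ n * w) = w := LinearMap.congr_fun hg w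
  simp only [LinearMap.comp_apply, LinearMap.mulLeft_apply, hw, g_mul]

lemma natDegree_le_of_pow_mul_eq_pow_mul_hasseDeriv {f u w : F[X]} (hf : f ≠ 0) {n k : ℕ}
    (h : f ^ n * w = f ^ k * hasseDeriv k (f ^ n * u)) :
    w.natDegree ≤ k * f.natDegree + u.natDegree := by
  rcases eq_or_ne w 0 with rfl | hw
  · simp
  have degree_lhs : (f ^ n * w).natDegree = n * f.natDegree + w.natDegree := by
    rw [natDegree_mul (pow_ne_zero n hf) hw, natDegree_pow]
  have degree_rhs : (f ^ k * hasseDeriv k (f ^ n * u)).natDegree ≤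
      k * f.natDegree + (n * f.natDegree + u.natDegree) :=
    calc
      _ ≤ (f ^ k).natDegree + (hasseDeriv k (f ^ n * u)).natDegree := natDegree_mul_le
      _ ≤ k * f.natDegree + (f ^ n * u).natDegree :=
        add_le_add natDegree_pow_le ((natDegree_hasseDeriv_le _ _).trans (Nat.sub_le _ _))
      _ ≤ k * f.natDegree + (n * f.natDegree + u.natDegree) := by
        grw [natDegree_mul_le, natDegree_pow_le]
  rw [← h, degree_lhs] at degree_rhs
  lia

end HasseDerivative

section AuxiliaryPolynomial

open Polynomial

variable {F : Type*} [Field F]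

lemma finrank_degreeLT (n : ℕ) : Module.finrank F (degreeLT F n) = n := by
  simp [(degreeLTEquiv F n).finrank_eq]

lemma natDegree_le_of_mem_degreeLT {n : ℕ} {p : F[X]} (hp : p ∈ degreeLT F n) :
    p.natDegree ≤ n :=
  natDegree_le_of_degree_le (mem_degreeLT.1 hp).le

lemma exists_ne_zero_forall_map_eq_zero_of_mem_degreeLT {V κ : Type*} [AddCommGroup V]
    [Module F V] [Module.Finite F V] [Fintype κ] (Φ : κ → V →ₗ[F] F[X]) {M : ℕ}
    (hΦ : ∀ k v, Φ k v ∈ degreeLT F M) (hM : Fintype.card κ * M < Module.finrank F V) :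
    ∃ v ≠ 0, ∀ k, Φ k v = 0 := by
  let Ψ : V →ₗ[F] κ → degreeLT F M := LinearMap.pi fun k => (Φ k).codRestrict _ (hΦ k)
  have : Module.Finite F (degreeLT F M) := .equiv (degreeLTEquiv F M).symm
  have ker_ne_bot : LinearMap.ker Ψ ≠ ⊥ := LinearMap.ker_ne_bot_of_finrank_lt (by
    simpa [Module.finrank_pi_fintype, finrank_degreeLT] using hM)
  obtain ⟨v, hv, hv0⟩ := (Submodule.ne_bot_iff _).1 ker_ne_bot
  exact ⟨v, hv0, fun k => congrArg Subtype.val (congrFun (LinearMap.mem_ker.1 hv) k)⟩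

/-- Stepanov's auxiliary polynomial `∑ⱼ (rⱼ + fⁿ sⱼ) zʲ`, where `v j = (rⱼ, sⱼ)` are polynomials of
degree less than `D`. The method takes `z = X ^ q`, which near a point `x` of `𝔽_q` behaves like the
constant `z = C x`. -/
noncomputable def auxPoly (f : F[X]) (n : ℕ) {J D : ℕ} (v : Fin J → degreeLT F D × degreeLT F D)
    (z : F[X]) : F[X] :=
  ∑ j, ((v j).1 + f ^ n * (v j).2 : F[X]) * z ^ (j : ℕ)

variable {J D : ℕ}

lemma sub_dvd_auxPoly_sub_auxPoly (f : F[X]) (n : ℕ) (v : Fin J → degreeLT F D × degreeLT F D)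
    (z w : F[X]) : z - w ∣ auxPoly f n v z - auxPoly f n v w := by
  rw [auxPoly, auxPoly, ← sum_sub_distrib]
  refine dvd_sum fun j _ => ?_
  rw [← mul_sub]
  exact (sub_dvd_pow_sub_pow z w j).mul_left _

lemma natDegree_auxPoly_X_pow_le (f : F[X]) (n q : ℕ)
    (v : Fin J → degreeLT F D × degreeLT F D) :
    (auxPoly f n v (X ^ q)).natDegree ≤ D + n * f.natDegree + (J - 1) * q := by
  refine natDegree_sum_le_of_forall_le _ _ fun j _ => natDegree_mul_le.trans (add_le_add ?_ ?_)
  · have degree_fst := natDegree_le_of_mem_degreeLT (v j).1.2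
    have degree_snd := natDegree_le_of_mem_degreeLT (v j).2.2
    refine natDegree_add_le_of_degree_le (by lia) (natDegree_mul_le.trans ?_)
    rw [add_comm D]
    exact add_le_add natDegree_pow_le degree_snd
  · rw [← pow_mul, natDegree_X_pow, mul_comm]
    exact Nat.mul_le_mul_right q (by lia)

lemma auxPoly_succ (f : F[X]) (n : ℕ) (v : Fin (J + 1) → degreeLT F D × degreeLT F D)
    (z : F[X]) :
    auxPoly f n v z = ((v 0).1 + f ^ n * (v 0).2) + z * auxPoly f n (Fin.tail v) z := by
  simp only [auxPoly, Fin.sum_univ_succ, mul_sum, Fin.tail, Fin.val_zero, pow_zero, mul_one,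
    Fin.val_succ, pow_succ']
  congr 1
  exact sum_congr rfl fun j _ => by ring

-- Multiplied by `f ^ k`, the `k`-th Hasse derivative of the local model is, at the points where
-- `f ^ n = a`, the value of a polynomial of small degree that depends linearly on `v`.
lemma exists_linearMap_eval_eq_pow_mul_eval_hasseDeriv_auxPoly_C {f : F[X]} (hf : f ≠ 0) (n : ℕ)
    (a : F) (k : ℕ) :
    ∃ Φ : (Fin J → degreeLT F D × degreeLT F D) →ₗ[F] F[X],
      (∀ v, Φ v ∈ degreeLT F (D + k * f.natDegree + J)) ∧
      ∀ v x, f.eval x ^ n = a →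
        (Φ v).eval x = f.eval x ^ k * (hasseDeriv k (auxPoly f n v (C x))).eval x := by
  obtain ⟨L, hL⟩ := exists_linearMap_pow_mul_eq_pow_mul_hasseDeriv hf n k
  let Φ : (Fin J → degreeLT F D × degreeLT F D) →ₗ[F] F[X] :=
    ∑ j : Fin J, LinearMap.mulLeft F (X ^ (j : ℕ)) ∘ₗ
      (LinearMap.mulLeft F (f ^ k) ∘ₗ hasseDeriv k ∘ₗ (degreeLT F D).subtype ∘ₗ
          LinearMap.fst F _ _ +
        a • L ∘ₗ (degreeLT F D).subtype ∘ₗ LinearMap.snd F _ _) ∘ₗ LinearMap.proj j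
  have Φ_apply (v) : Φ v = ∑ j : Fin J, X ^ (j : ℕ) *
      (f ^ k * hasseDeriv k ((v j).1 : F[X]) + a • L (v j).2) := by
    simp [Φ, LinearMap.sum_apply]
  refine ⟨Φ, fun v => ?_, fun v x hfa => ?_⟩
  · rw [Φ_apply]
    refine Submodule.sum_mem _ fun j _ => mem_degreeLT.2 (degree_le_natDegree.trans_lt ?_)
    have degree_fst : (f ^ k * hasseDeriv k ((v j).1 : F[X])).natDegree ≤ k * f.natDegree + D :=
      (natDegree_le_of_pow_mul_eq_pow_mul_hasseDeriv hf (n := 0) (by simp)).trans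
        (Nat.add_le_add_left (natDegree_le_of_mem_degreeLT (v j).1.2) _)
    have degree_snd : (a • L (v j).2).natDegree ≤ k * f.natDegree + D :=
      (natDegree_smul_le _ _).trans <|
        (natDegree_le_of_pow_mul_eq_pow_mul_hasseDeriv hf (hL _)).trans
          (Nat.add_le_add_left (natDegree_le_of_mem_degreeLT (v j).2.2) _)
    grw [natDegree_mul_le, natDegree_X_pow, natDegree_add_le_of_degree_le degree_fst degree_snd]
    exact_mod_cast (by lia : (j : ℕ) + (k * f.natDegree + D) < D + k * f.natDegree + J)
  · rw [Φ_apply, auxPoly, map_sum, ← eval_pow, ← eval_mul, mul_sum, eval_finsetSum,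
      eval_finsetSum]
    refine sum_congr rfl fun j _ => ?_
    rw [← C_pow, mul_comm _ (C _), ← smul_eq_C_mul, map_smul, map_add, mul_smul_comm,
      mul_add (f ^ k), ← hL]
    simp only [eval_mul, eval_add, eval_smul, eval_pow, eval_X, hfa, smul_eq_mul]

lemma exists_ne_zero_forall_X_sub_C_pow_dvd_auxPoly_C {f : F[X]} (hf : f ≠ 0) (n : ℕ) (a : F)
    {l : ℕ} (hJ : l * (D + l * f.natDegree + J) < 2 * (J * D)) :
    ∃ v : Fin J → degreeLT F D × degreeLT F D, v ≠ 0 ∧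
      ∀ x, f.eval x ≠ 0 → f.eval x ^ n = a → (X - C x) ^ l ∣ auxPoly f n v (C x) := by
  have : Module.Finite F (degreeLT F D) := .equiv (degreeLTEquiv F D).symm
  choose Φ Φ_mem Φ_eval using
    exists_linearMap_eval_eq_pow_mul_eval_hasseDeriv_auxPoly_C (J := J) (D := D) hf n a
  have Φ_mem_of_lt (k : Fin l) (v) : Φ k v ∈ degreeLT F (D + l * f.natDegree + J) :=
    degreeLT_mono (by grw [k.2.le]) (Φ_mem k v)
  obtain ⟨v, hv0, hv⟩ := exists_ne_zero_forall_map_eq_zero_of_mem_degreeLT _ Φ_mem_of_lt (by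
    simpa [Module.finrank_pi_fintype, Module.finrank_prod, finrank_degreeLT, ← two_mul,
      mul_left_comm] using hJ)
  refine ⟨v, hv0, fun x hfx hfa => X_sub_C_pow_dvd_iff_forall_eval_hasseDeriv.2 fun k hk => ?_⟩
  have eval_eq_zero := Φ_eval k v x hfa
  rw [hv ⟨k, hk⟩, eval_zero] at eval_eq_zero
  exact (mul_eq_zero.1 eval_eq_zero.symm).resolve_left (pow_ne_zero k hfx)

end AuxiliaryPolynomial

section SignValued

lemma abs_intCast_le_one_of_mem {a : ℤ} (ha : a ∈ ({-1, 0, 1} : Finset ℤ)) : |(a : ℝ)| ≤ 1 := by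
  simp only [mem_insert, mem_singleton] at ha
  rcases ha with rfl | rfl | rfl <;> simp

variable {Ω : Type*}

lemma sum_eq_sum_sign_fibers {s : Finset Ω} {U : Ω → ℤ}
    (hU : ∀ x ∈ s, U x ∈ ({-1, 0, 1} : Finset ℤ)) (g : Ω → ℝ) :
    ∑ x ∈ s, g x =
      ∑ x ∈ s with U x = -1, g x + ∑ x ∈ s with U x = 0, g x + ∑ x ∈ s with U x = 1, g x := by
  rw [← sum_fiberwise_of_maps_to hU]
  simp [add_assoc]

lemma sum_mul_sign_eq {s : Finset Ω} {U : Ω → ℤ} (hU : ∀ x ∈ s, U x ∈ ({-1, 0, 1} : Finset ℤ))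
    (g : Ω → ℝ) :
    ∑ x ∈ s, g x * U x = ∑ x ∈ s with U x = 1, g x - ∑ x ∈ s with U x = -1, g x := by
  have fiber (u : ℤ) : ∑ x ∈ s with U x = u, g x * U x = u * ∑ x ∈ s with U x = u, g x := by
    rw [mul_sum]
    exact sum_congr rfl fun x hx => by rw [(mem_filter.1 hx).2, mul_comm]
  rw [sum_eq_sum_sign_fibers hU, fiber, fiber, fiber]
  push_cast
  ring

end SignValued

section QuadraticCharacterSum

open Polynomial

variable {F : Type*} [Field F]

lemma eq_C_mul_sq_of_sq_mul_eq {f r s : F[X]} {c : F} (hr : r ≠ 0) (hc : c ≠ 0)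
    (h : r ^ 2 * f = C c * s ^ 2) : ∃ g, f = C c * g ^ 2 := by
  have sq_dvd : r ^ 2 ∣ s ^ 2 :=
    (isUnit_C.2 hc.isUnit).dvd_mul_left.1 (Dvd.intro f h)
  obtain ⟨g, rfl⟩ := (UniqueFactorizationMonoid.pow_dvd_pow_iff_dvd two_ne_zero).1 sq_dvd
  refine ⟨g, mul_left_cancel₀ (pow_ne_zero 2 hr) ?_⟩
  rw [h]
  ring

variable [Fintype F]

lemma X_pow_card_dvd_pow_card_sub_C (f : F[X]) :
    X ^ Fintype.card F ∣ f ^ Fintype.card F - C (f.eval 0) := by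
  have X_dvd : X ∣ f - C (f.eval 0) := by simp [X_dvd_iff, coeff_zero_eq_eval_zero]
  have expand_dvd := _root_.map_dvd (expand F (Fintype.card F)) X_dvd
  rwa [expand_X, map_sub, expand_C, FiniteField.expand_card] at expand_dvd

-- Multiplying by `(r - f ^ (q / 2) * s) * f` and using `f ^ q ≡ f(0) mod X ^ q` turns the
-- hypothesis into a congruence between polynomials of degree less than `q`, hence into an equality.
lemma eq_zero_of_X_pow_card_dvd_add_pow_mul (hq : Odd (Fintype.card F)) {f : F[X]}
    (hf : ∀ c g, f ≠ C c * g ^ 2) (hf0 : f.eval 0 ≠ 0) {D : ℕ}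
    (hD : 2 * D + f.natDegree < Fintype.card F) {r s : F[X]} (hr : r.natDegree ≤ D)
    (hs : s.natDegree ≤ D) (h : X ^ Fintype.card F ∣ r + f ^ (Fintype.card F / 2) * s) :
    r = 0 ∧ s = 0 := by
  set q := Fintype.card F
  have pow_card : f ^ q = f ^ (q / 2) * f ^ (q / 2) * f := by
    rw [← pow_add, ← pow_succ, ← two_mul, Nat.two_mul_div_two_add_one_of_odd hq]
  have dvd_norm : X ^ q ∣ r ^ 2 * f - C (f.eval 0) * s ^ 2 := by
    have norm_eq : r ^ 2 * f - C (f.eval 0) * s ^ 2 =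
        (r + f ^ (q / 2) * s) * ((r - f ^ (q / 2) * s) * f) +
          (f ^ q - C (f.eval 0)) * s ^ 2 := by
      rw [pow_card]
      ring
    rw [norm_eq]
    exact dvd_add (h.mul_right _) ((X_pow_card_dvd_pow_card_sub_C f).mul_right _)
  have degree_norm : (r ^ 2 * f - C (f.eval 0) * s ^ 2).natDegree ≤ 2 * D + f.natDegree := by
    refine (natDegree_sub_le_of_le ?_ ?_).trans_eq (max_self _)
    · grw [natDegree_mul_le, natDegree_pow_le, hr]
    · grw [natDegree_C_mul_le, natDegree_pow_le, hs]
      lia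
  have norm_eq_zero : r ^ 2 * f = C (f.eval 0) * s ^ 2 :=
    sub_eq_zero.1 <| eq_zero_of_dvd_of_natDegree_lt dvd_norm <| by
      simpa using degree_norm.trans_lt hD
  have hr0 : r = 0 := by
    by_contra hr0
    obtain ⟨g, hg⟩ := eq_C_mul_sq_of_sq_mul_eq hr0 hf0 norm_eq_zero
    exact hf _ g hg
  exact ⟨hr0, by simpa [hr0, hf0] using norm_eq_zero.symm⟩

lemma eq_zero_of_auxPoly_X_pow_card_eq_zero (hq : Odd (Fintype.card F)) {f : F[X]}
    (hf : ∀ c g, f ≠ C c * g ^ 2) (hf0 : f.eval 0 ≠ 0) {D : ℕ}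
    (hD : 2 * D + f.natDegree < Fintype.card F) {J : ℕ}
    {v : Fin J → degreeLT F D × degreeLT F D}
    (h : auxPoly f (Fintype.card F / 2) v (X ^ Fintype.card F) = 0) : v = 0 := by
  induction J with
  | zero => exact Subsingleton.elim _ _
  | succ J ih =>
    rw [auxPoly_succ] at h
    obtain ⟨fst_eq, snd_eq⟩ := eq_zero_of_X_pow_card_dvd_add_pow_mul hq hf hf0 hD
      (natDegree_le_of_mem_degreeLT (v 0).1.2) (natDegree_le_of_mem_degreeLT (v 0).2.2)
      ((dvd_add_left (dvd_mul_right _ _)).1 (h ▸ dvd_zero _))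
    have tail_eq : Fin.tail v = 0 := ih (by simpa [fst_eq, snd_eq] using h)
    have head_eq : v 0 = 0 := Prod.ext (Subtype.ext fst_eq) (Subtype.ext snd_eq)
    exact funext (Fin.cases head_eq (congrFun tail_eq))

lemma card_mul_le_of_forall_eval_pow_eq (hq : Odd (Fintype.card F)) {f : F[X]}
    (hf : ∀ c g, f ≠ C c * g ^ 2) (hf0 : f.eval 0 ≠ 0) {D J l : ℕ}
    (hD : 2 * D + f.natDegree < Fintype.card F) (hl : l ≤ Fintype.card F)
    (hJ : l * (D + l * f.natDegree + J) < 2 * (J * D)) {S : Finset F} {a : F} (ha : a ≠ 0)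
    (hS : ∀ x ∈ S, f.eval x ^ (Fintype.card F / 2) = a) :
    #S * l ≤ D + Fintype.card F / 2 * f.natDegree + (J - 1) * Fintype.card F := by
  set q := Fintype.card F
  have f_ne_zero : f ≠ 0 := fun h => hf 0 0 (by simp [h])
  have half_ne_zero : q / 2 ≠ 0 := by
    have : 1 < q := Fintype.one_lt_card
    lia
  obtain ⟨v, hv0, hv⟩ := exists_ne_zero_forall_X_sub_C_pow_dvd_auxPoly_C f_ne_zero (q / 2) a hJ
  have aux_ne_zero : auxPoly f (q / 2) v (X ^ q) ≠ 0 :=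
    fun h => hv0 (eq_zero_of_auxPoly_X_pow_card_eq_zero hq hf hf0 hD h)
  refine (card_mul_le_natDegree_of_forall_X_sub_C_pow_dvd aux_ne_zero fun x hx => ?_).trans
    (natDegree_auxPoly_X_pow_le f (q / 2) q v)
  have hfx : f.eval x ≠ 0 := fun h => ha (by rw [← hS x hx, h, zero_pow half_ne_zero])
  have X_pow_sub : (X ^ q - C x : F[X]) = (X - C x) ^ q := by
    rw [← FiniteField.expand_card (X - C x), map_sub, expand_X, expand_C]
  have dvd_sub : (X - C x) ^ l ∣ auxPoly f (q / 2) v (X ^ q) - auxPoly f (q / 2) v (C x) :=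
    (pow_dvd_pow _ hl).trans (X_pow_sub ▸ sub_dvd_auxPoly_sub_auxPoly f (q / 2) v (X ^ q) (C x))
  exact (dvd_sub_left (hv x hfx (hS x hx))).1 dvd_sub

lemma exists_stepanov_parameters {m n q : ℕ} (hn : 3 * m + 4 ≤ n) (hq : n * n ≤ q) :
    ∃ D J, 2 * D + m < q ∧ n * (D + n * m + J) < 2 * (J * D) ∧ 2 * (J - 1) ≤ n + 2 * m + 1 := by
  have q_large : 3 * m + 4 ≤ q := hn.trans ((Nat.le_mul_self n).trans hq)
  obtain ⟨D, D_lower, D_upper⟩ : ∃ D, q ≤ 2 * D + m + 2 ∧ 2 * D + m < q :=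
    ⟨(q - m - 1) / 2, by lia, by lia⟩
  obtain ⟨J, J_lower, J_upper⟩ : ∃ J, n + 2 * m + 2 ≤ 2 * J ∧ 2 * (J - 1) ≤ n + 2 * m + 1 :=
    ⟨(n + 3) / 2 + m, by lia, by lia⟩
  refine ⟨D, J, D_upper, ?_, J_upper⟩
  have n_le : n ≤ 2 * D := by nlinarith
  zify at *
  have J_bound : (n + 2 * m + 2) * (2 * D - n : ℤ) ≤ 2 * J * (2 * D - n) :=
    mul_le_mul_of_nonneg_right J_lower (by linarith)
  have D_bound : (2 * m + 2) * (n * n - m - 2 : ℤ) ≤ (2 * m + 2) * (2 * D) :=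
    mul_le_mul_of_nonneg_left (by linarith) (by positivity)
  have n_bound : (2 * m + 2 : ℤ) * (n + m + 2) < n * n := by nlinarith
  linarith

lemma two_mul_sqrt_mul_card_le_of_forall_eval_pow_eq (hq : Odd (Fintype.card F)) {f : F[X]}
    (hf : ∀ c g, f ≠ C c * g ^ 2) (hf0 : f.eval 0 ≠ 0)
    (hn : 3 * f.natDegree + 4 ≤ (Fintype.card F).sqrt) {S : Finset F} {a : F} (ha : a ≠ 0)
    (hS : ∀ x ∈ S, f.eval x ^ (Fintype.card F / 2) = a) :
    2 * (Fintype.card F).sqrt * #S ≤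
      ((Fintype.card F).sqrt + 3 * f.natDegree + 2) * Fintype.card F := by
  obtain ⟨D, J, hD, hJ, J_le⟩ := exists_stepanov_parameters hn (Nat.sqrt_le _)
  have count := card_mul_le_of_forall_eval_pow_eq hq hf hf0 hD (Nat.sqrt_le_self _) hJ ha hS
  have J_bound := Nat.mul_le_mul_right (Fintype.card F) J_le
  have half_bound := Nat.mul_le_mul_right f.natDegree (Nat.mul_div_le (Fintype.card F) 2)
  nlinarith

variable [DecidableEq F]

lemma quadraticChar_mem (x : F) : quadraticChar F x ∈ ({-1, 0, 1} : Finset ℤ) := by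
  rcases quadraticChar_isQuadratic F x with h | h | h <;> simp [h]

lemma abs_sum_quadraticChar_eval_le_of_card_le {f : F[X]} (hf : f ≠ 0) {B : ℝ}
    (hB : ∀ a : ℤ, IsUnit a → 2 * (#{x | quadraticChar F (f.eval x) = a} : ℝ) ≤ B) :
    |∑ x, (quadraticChar F (f.eval x) : ℝ)| ≤ B + f.natDegree - Fintype.card F := by
  let N (a : ℤ) : ℝ := #{x | quadraticChar F (f.eval x) = a}
  have mem (x) (_ : x ∈ (univ : Finset F)) : quadraticChar F (f.eval x) ∈ ({-1, 0, 1} : Finset ℤ) :=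
    quadraticChar_mem _
  have sum_eq : ∑ x, (quadraticChar F (f.eval x) : ℝ) = N 1 - N (-1) := by
    simpa [N, -quadraticChar_apply] using sum_mul_sign_eq mem fun _ => 1
  have card_eq : (Fintype.card F : ℝ) = N (-1) + N 0 + N 1 := by
    simpa [N, -quadraticChar_apply] using sum_eq_sum_sign_fibers mem fun _ => 1
  have zeros_le : N 0 ≤ f.natDegree :=
    Nat.cast_le.2 <| card_le_degree_of_subset_roots fun x hx => (mem_roots hf).2 <|
      quadraticChar_eq_zero_iff.1 (mem_filter.1 hx).2
  rw [sum_eq, abs_le]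
  constructor <;> linarith [hB 1 isUnit_one, hB (-1) isUnit_one.neg]

lemma quadraticChar_eq_pow_half_card (hq : Odd (Fintype.card F)) (x : F) :
    (quadraticChar F x : F) = x ^ (Fintype.card F / 2) := by
  refine quadraticChar_eq_pow_of_char_ne_two' (fun h => ?_) x
  exact Nat.not_even_iff_odd.2 hq (Nat.even_iff.2 (FiniteField.even_card_of_char_two h))

lemma abs_quadraticChar_le_one (x : F) : |(quadraticChar F x : ℝ)| ≤ 1 :=
  abs_intCast_le_one_of_mem (quadraticChar_mem x)

lemma abs_sum_quadraticChar_eval_le_of_eval_zero_ne_zero (hq : Odd (Fintype.card F)) {f : F[X]}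
    (hf : ∀ c g, f ≠ C c * g ^ 2) (hf0 : f.eval 0 ≠ 0)
    (hn : 3 * f.natDegree + 4 ≤ (Fintype.card F).sqrt) :
    |∑ x, (quadraticChar F (f.eval x) : ℝ)| ≤ (3 * f.natDegree + 4) * √(Fintype.card F) := by
  set m := f.natDegree
  set n := (Fintype.card F).sqrt
  set s := √(Fintype.card F)
  have f_ne_zero : f ≠ 0 := fun h => hf 0 0 (by simp [h])
  have card_eq : (Fintype.card F : ℝ) = s * s := (Real.mul_self_sqrt (Nat.cast_nonneg _)).symm
  have n_le : (n : ℝ) ≤ s := Real.nat_sqrt_le_real_sqrt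
  have lt_n : s < n + 1 := Real.real_sqrt_lt_nat_sqrt_succ
  have n_large : 3 * (m : ℝ) + 4 ≤ n := by exact_mod_cast hn
  have n_pos : (0 : ℝ) < n := by positivity [n_large.trans_lt' (by positivity)]
  have fiber_le (a : ℤ) (ha : IsUnit a) :
      2 * (#{x | quadraticChar F (f.eval x) = a} : ℝ) ≤ (n + 3 * m + 2) * (s * s) / n := by
    have count := two_mul_sqrt_mul_card_le_of_forall_eval_pow_eq hq hf hf0 hn
      (ha.map (Int.castRingHom F)).ne_zero (S := {x | quadraticChar F (f.eval x) = a})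
      fun x hx => by rw [← quadraticChar_eq_pow_half_card hq, (mem_filter.1 hx).2]; rfl
    rw [le_div_iff₀ n_pos, ← card_eq, mul_right_comm]
    exact_mod_cast count
  calc
    _ ≤ (n + 3 * m + 2) * (s * s) / n + m - s * s :=
      (abs_sum_quadraticChar_eval_le_of_card_le f_ne_zero fiber_le).trans_eq (by rw [card_eq])
    _ = ((3 * m + 2) * (s * s) + m * n) / n := by field
    _ ≤ (3 * m + 4) * s := by
      rw [div_le_iff₀ n_pos]
      nlinarith [mul_le_mul_of_nonneg_left lt_n.le (by positivity : 0 ≤ (3 * m + 2) * s),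
        mul_le_mul_of_nonneg_left n_large (by positivity : 0 ≤ s),
        mul_le_mul_of_nonneg_right n_le n_pos.le]

lemma taylor_ne_C_mul_sq {R : Type*} [CommRing R] {f : R[X]} (hf : ∀ c g, f ≠ C c * g ^ 2)
    (t : R) : ∀ c g, taylor t f ≠ C c * g ^ 2 := by
  intro c g h
  apply hf c (taylor (-t) g)
  rw [← taylor_pow, ← taylor_C (-t) c, ← taylor_mul, ← h, taylor_taylor, neg_add_cancel,
    taylor_zero]

lemma abs_sum_quadraticChar_eval_le (hq : Odd (Fintype.card F)) {f : F[X]}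
    (hf : ∀ c g, f ≠ C c * g ^ 2) :
    |∑ x, (quadraticChar F (f.eval x) : ℝ)| ≤ (3 * f.natDegree + 4) * √(Fintype.card F) := by
  rcases le_or_gt (3 * f.natDegree + 4) (Fintype.card F).sqrt with hn | hn
  · have degree_lt : f.natDegree < Fintype.card F := by
      have := Nat.sqrt_le_self (Fintype.card F)
      lia
    obtain ⟨t, ht⟩ : ∃ t, f.eval t ≠ 0 := by
      by_contra! eval_eq_zero
      refine hf 0 0 ?_
      simpa using eq_zero_of_natDegree_lt_card_of_eval_eq_zero f
        Function.injective_id eval_eq_zero degree_lt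
    have bound := abs_sum_quadraticChar_eval_le_of_eval_zero_ne_zero hq (taylor_ne_C_mul_sq hf t)
      (by simpa [taylor_eval] using ht) (by rwa [natDegree_taylor])
    simp only [taylor_eval, natDegree_taylor] at bound
    rwa [← Equiv.sum_comp (Equiv.addRight t)]
  · have sqrt_le : √(Fintype.card F) ≤ 3 * f.natDegree + 4 :=
      Real.real_sqrt_lt_nat_sqrt_succ.le.trans (by exact_mod_cast hn)
    calc
      _ ≤ ∑ _x : F, (1 : ℝ) := (abs_sum_le_sum_abs _ _).trans
        (sum_le_sum fun x _ => abs_quadraticChar_le_one (f.eval x))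
      _ = √(Fintype.card F) * √(Fintype.card F) := by simp
      _ ≤ (3 * f.natDegree + 4) * √(Fintype.card F) := by gcongr

lemma X_sub_C_mul_ne_C_mul_sq {R : Type*} [CommRing R] [IsDomain R] {g : R[X]} {x : R}
    (hg : g.eval x ≠ 0) : ∀ c h, (X - C x) * g ≠ C c * h ^ 2 := by
  intro c h eq
  have root : c = 0 ∨ h.eval x = 0 := by simpa using (congrArg (eval x) eq).symm
  have derivative_eq := congrArg (eval x) (congrArg derivative eq)
  refine hg ?_
  rcases root with hc | hx
  · simpa [hc] using derivative_eq
  · simpa [derivative_pow, hx] using derivative_eq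

lemma abs_sum_mul_quadraticChar_add_le (hq : Odd (Fintype.card F)) {a b a' b' : F}
    (hb : a ≠ b) (ha' : a ≠ a') (hb' : a ≠ b') (n : ℕ) :
    |∑ x, (quadraticChar F (x + a) * quadraticChar F (x + b) ^ n : ℝ) *
        (quadraticChar F (x + a') * quadraticChar F (x + b') ^ n)| ≤
      (6 * n + 10) * √(Fintype.card F) := by
  let g : F[X] := (X + C b) ^ n * ((X + C a') * (X + C b') ^ n)
  have g_ne_zero : g.eval (-a) ≠ 0 := by
    simp [g, neg_add_eq_zero, hb, ha', hb']
  let f := (X - C (-a)) * g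
  have nonsquare : ∀ c h, f ≠ C c * h ^ 2 := X_sub_C_mul_ne_C_mul_sq g_ne_zero
  have degree_le : f.natDegree ≤ 2 * n + 2 := by
    have linear (c : F) : (X + C c).natDegree ≤ 1 := (natDegree_X_add_C c).le
    refine (natDegree_mul_le_of_le (natDegree_X_sub_C_le _) <|
      natDegree_mul_le_of_le (natDegree_pow_le_of_le n (linear b)) <|
        natDegree_mul_le_of_le (linear a') (natDegree_pow_le_of_le n (linear b'))).trans ?_
    lia
  calc
    _ = |∑ x, (quadraticChar F (f.eval x) : ℝ)| := by simp [f, g, mul_assoc, -quadraticChar_apply]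
    _ ≤ (3 * f.natDegree + 4) * √(Fintype.card F) := abs_sum_quadraticChar_eval_le hq nonsquare
    _ ≤ (3 * (2 * n + 2 : ℕ) + 4) * √(Fintype.card F) := by gcongr
    _ = (6 * n + 10) * √(Fintype.card F) := by push_cast; ring

lemma abs_sum_mul_quadraticChar_add_le_ite_add (hq : Odd (Fintype.card F)) {a b : F}
    (hb : a ≠ b) (a' b' : F) (n : ℕ) :
    |∑ x, (quadraticChar F (x + a) * quadraticChar F (x + b) ^ n : ℝ) *
        (quadraticChar F (x + a') * quadraticChar F (x + b') ^ n)| ≤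
      (if a = a' then (Fintype.card F : ℝ) else 0) + (if a = b' then (Fintype.card F : ℝ) else 0) +
        (6 * n + 10) * √(Fintype.card F) := by
  have abs_le_one (c d x : F) :
      |(quadraticChar F (x + c) * quadraticChar F (x + d) ^ n : ℝ)| ≤ 1 := by
    rw [abs_mul, abs_pow]
    exact mul_le_one₀ (abs_quadraticChar_le_one _) (by positivity)
      (pow_le_one₀ (abs_nonneg _) (abs_quadraticChar_le_one _))
  have le_card : |∑ x, (quadraticChar F (x + a) * quadraticChar F (x + b) ^ n : ℝ) *
      (quadraticChar F (x + a') * quadraticChar F (x + b') ^ n)| ≤ Fintype.card F :=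
    (abs_sum_le_sum_abs _ _).trans <| (sum_le_card_nsmul _ _ 1 fun x _ => by
      rw [abs_mul]
      exact mul_le_one₀ (abs_le_one a b x) (abs_nonneg _) (abs_le_one a' b' x)).trans_eq (by simp)
  have sqrt_nonneg : 0 ≤ (6 * n + 10) * √(Fintype.card F) := by positivity
  by_cases ha' : a = a'
  · rw [if_pos ha']
    split_ifs <;> linarith
  by_cases hb' : a = b'
  · rw [if_pos hb', if_neg ha']
    linarith
  rw [if_neg ha', if_neg hb', zero_add, zero_add]
  exact abs_sum_mul_quadraticChar_add_le hq hb ha' hb' n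

end QuadraticCharacterSum

section TamperedCharacterSum

-- Testing against the signs `θ y` of the inner sums bounds the left side by the square of
-- `∑ x, μ x * ∑ y, θ y * B y x`, and Cauchy–Schwarz in `x` leaves the Gram matrix of `B`.
lemma sq_sum_abs_sum_mul_le {X Y : Type*} [Fintype X] [Fintype Y] (μ : X → ℝ) (B : Y → X → ℝ) :
    (∑ y, |∑ x, μ x * B y x|) ^ 2 ≤
      (∑ x, μ x ^ 2) * ∑ y, ∑ y', |∑ x, B y x * B y' x| := by
  let θ (y : Y) : ℝ := SignType.sign (∑ x, μ x * B y x)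
  have abs_θ_le (y : Y) : |θ y| ≤ 1 := by
    rcases SignType.trichotomy (SignType.sign (∑ x, μ x * B y x)) with h | h | h <;> simp [θ, h]
  have sum_abs_eq : ∑ y, |∑ x, μ x * B y x| = ∑ x, μ x * ∑ y, θ y * B y x := by
    simp_rw [mul_sum, ← sign_mul_self]
    rw [sum_comm]
    refine sum_congr rfl fun y _ => ?_
    rw [mul_sum]
    exact sum_congr rfl fun x _ => mul_left_comm _ _ _
  have sum_sq_eq : ∑ x, (∑ y, θ y * B y x) ^ 2 =
      ∑ y, ∑ y', θ y * θ y' * ∑ x, B y x * B y' x := by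
    simp_rw [sq, sum_mul_sum, mul_sum]
    rw [sum_comm]
    refine sum_congr rfl fun y _ => ?_
    rw [sum_comm]
    exact sum_congr rfl fun y' _ => sum_congr rfl fun x _ => mul_mul_mul_comm _ _ _ _
  rw [sum_abs_eq]
  refine (sum_mul_sq_le_sq_mul_sq _ _ _).trans ?_
  rw [sum_sq_eq]
  gcongr with y _ y' _
  refine (le_abs_self _).trans ?_
  rw [abs_mul, abs_mul]
  exact mul_le_of_le_one_left (abs_nonneg _) (mul_le_one₀ (abs_θ_le y) (abs_nonneg _) (abs_θ_le y'))

variable {F : Type*} [Field F] [Fintype F] [DecidableEq F]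

lemma sq_sum_abs_sum_mul_quadraticChar_le (hq : Odd (Fintype.card F)) {A : F → F}
    (hA : ∀ y, A y ≠ y) (μ : F → ℝ) (n : ℕ) :
    (∑ y, |∑ x, μ x * (quadraticChar F (x + y) * quadraticChar F (x + A y) ^ n)|) ^ 2 ≤
      (∑ x, μ x ^ 2) * (Fintype.card F ^ 2 * (2 + (6 * n + 10) * √(Fintype.card F))) := by
  let q : ℝ := Fintype.card F
  let B (y x : F) : ℝ := quadraticChar F (x + y) * quadraticChar F (x + A y) ^ n
  refine (sq_sum_abs_sum_mul_le μ B).trans (mul_le_mul_of_nonneg_left ?_ (by positivity))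
  calc
    ∑ y, ∑ y', |∑ x, B y x * B y' x| ≤ ∑ y' : F, ∑ y : F,
        ((if y = y' then q else 0) + (if y = A y' then q else 0) + (6 * n + 10) * √q) := by
      rw [sum_comm]
      refine sum_le_sum fun y' _ => sum_le_sum fun y _ => ?_
      exact abs_sum_mul_quadraticChar_add_le_ite_add hq (hA y).symm y' (A y') n
    _ = q ^ 2 * (2 + (6 * n + 10) * √q) := by
      simp only [sum_add_distrib, sum_ite_eq', mem_univ, if_true, sum_const, card_univ,
        nsmul_eq_mul]
      ring

end TamperedCharacterSum

section SignDefect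

variable {Ω : Type*}

/-- Twice the statistical distance, within the event `s`, between the law of `U` under `μ` and a
uniform sign. The value `0` is kept as a possible outcome of `U`, as the quadratic character takes
it. -/
noncomputable def signDefect (s : Finset Ω) (μ : Ω → ℝ) (U : Ω → ℤ) : ℝ :=
  ∑ u ∈ ({-1, 0, 1} : Finset ℤ),
    |∑ x ∈ s with U x = u, μ x - (if u = 1 ∨ u = -1 then 1 / 2 else 0) * ∑ x ∈ s, μ x|

lemma signDefect_eq (s : Finset Ω) (μ : Ω → ℝ) (U : Ω → ℤ) :
    signDefect s μ U = |∑ x ∈ s with U x = -1, μ x - 1 / 2 * ∑ x ∈ s, μ x| +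
      |∑ x ∈ s with U x = 0, μ x| + |∑ x ∈ s with U x = 1, μ x - 1 / 2 * ∑ x ∈ s, μ x| := by
  simp [signDefect, add_assoc]

lemma signDefect_le_two_mul_sum {s : Finset Ω} {μ : Ω → ℝ} {U : Ω → ℤ} (hμ : ∀ x ∈ s, 0 ≤ μ x)
    (hU : ∀ x ∈ s, U x ∈ ({-1, 0, 1} : Finset ℤ)) : signDefect s μ U ≤ 2 * ∑ x ∈ s, μ x := by
  have fiber_nonneg (u : ℤ) : 0 ≤ ∑ x ∈ s with U x = u, μ x :=
    sum_nonneg fun x hx => hμ x (mem_filter.1 hx).1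
  rw [signDefect_eq, sum_eq_sum_sign_fibers hU μ]
  grind [fiber_nonneg (-1), fiber_nonneg 0, fiber_nonneg 1]

lemma signDefect_le_abs_sum_mul_add {s : Finset Ω} {μ : Ω → ℝ} {U : Ω → ℤ}
    (hμ : ∀ x ∈ s, 0 ≤ μ x) (hU : ∀ x ∈ s, U x ∈ ({-1, 0, 1} : Finset ℤ)) :
    signDefect s μ U ≤ |∑ x ∈ s, μ x * U x| + 2 * ∑ x ∈ s with U x = 0, μ x := by
  have zero_fiber_nonneg : 0 ≤ ∑ x ∈ s with U x = 0, μ x :=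
    sum_nonneg fun x hx => hμ x (mem_filter.1 hx).1
  rw [signDefect_eq, sum_mul_sign_eq hU, sum_eq_sum_sign_fibers hU μ]
  grind

variable [Fintype Ω]

lemma sum_abs_sum_fiber_le {V : Ω → ℤ} (hV : ∀ x, V x ∈ ({-1, 0, 1} : Finset ℤ)) (g : Ω → ℝ) :
    ∑ v ∈ ({-1, 0, 1} : Finset ℤ), |∑ x with V x = v, g x| ≤
      |∑ x, g x| + |∑ x, g x * V x| + 2 * |∑ x with V x = 0, g x| := by
  rw [sum_mul_sign_eq fun x _ => hV x, sum_eq_sum_sign_fibers (fun x _ => hV x) g]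
  rw [sum_insert (by simp), sum_insert (by simp), sum_singleton]
  grind

lemma sum_signDefect_le_two_mul_sum {μ : Ω → ℝ} {U V : Ω → ℤ} (hμ : ∀ x, 0 ≤ μ x)
    (hU : ∀ x, U x ∈ ({-1, 0, 1} : Finset ℤ)) (hV : ∀ x, V x ∈ ({-1, 0, 1} : Finset ℤ)) :
    ∑ v ∈ ({-1, 0, 1} : Finset ℤ), signDefect {x | V x = v} μ U ≤ 2 * ∑ x, μ x := by
  rw [← sum_fiberwise_of_maps_to (fun x _ => hV x) μ, mul_sum]
  exact sum_le_sum fun v _ => signDefect_le_two_mul_sum (fun x _ => hμ x) fun x _ => hU x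

-- The non-uniform XOR lemma for `ℤ/2`, corrected for the mass on which `U` or `V` vanishes.
lemma sum_signDefect_le_abs_sum_mul_add {μ : Ω → ℝ} {U V : Ω → ℤ} (hμ : ∀ x, 0 ≤ μ x)
    (hU : ∀ x, U x ∈ ({-1, 0, 1} : Finset ℤ)) (hV : ∀ x, V x ∈ ({-1, 0, 1} : Finset ℤ)) :
    ∑ v ∈ ({-1, 0, 1} : Finset ℤ), signDefect {x | V x = v} μ U ≤
      |∑ x, μ x * U x| + |∑ x, μ x * (U x * V x)| +
        2 * ∑ x with U x = 0, μ x + 2 * ∑ x with V x = 0, μ x := by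
  have abs_sum_zero_fiber_le : |∑ x with V x = 0, μ x * U x| ≤ ∑ x with V x = 0, μ x := by
    refine (abs_sum_le_sum_abs _ _).trans (sum_le_sum fun x _ => ?_)
    rw [abs_mul, abs_of_nonneg (hμ x)]
    exact mul_le_of_le_one_right (hμ x) (abs_intCast_le_one_of_mem (hU x))
  have zero_mass : ∑ v ∈ ({-1, 0, 1} : Finset ℤ), ∑ x with V x = v ∧ U x = 0, μ x =
      ∑ x with U x = 0, μ x := by
    rw [← sum_fiberwise_of_maps_to fun x _ => hV x]
    simp only [filter_filter, and_comm]
  calc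
    _ ≤ ∑ v ∈ ({-1, 0, 1} : Finset ℤ),
        (|∑ x with V x = v, μ x * U x| + 2 * ∑ x with V x = v ∧ U x = 0, μ x) :=
      sum_le_sum fun v _ => by
        rw [← filter_filter]
        exact signDefect_le_abs_sum_mul_add (fun x _ => hμ x) fun x _ => hU x
    _ ≤ |∑ x, μ x * U x| + |∑ x, μ x * U x * V x| + 2 * |∑ x with V x = 0, μ x * U x| +
        2 * ∑ x with U x = 0, μ x := by
      rw [sum_add_distrib, ← mul_sum, zero_mass]
      gcongr
      exact sum_abs_sum_fiber_le hV _
    _ ≤ _ := by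
      simp only [mul_assoc]
      linarith

lemma sum_abs_div_sub_div_eq_sum_signDefect_div {Y : Type*} [Fintype Y] {q : ℝ} (hq : 0 ≤ q)
    (μ : Ω → ℝ) (U V : Y → Ω → ℤ) :
    ∑ u ∈ ({-1, 0, 1} : Finset ℤ), ∑ v ∈ ({-1, 0, 1} : Finset ℤ), ∑ y,
        |(∑ x with U y x = u ∧ V y x = v, μ x) / q -
          (if u = 1 ∨ u = -1 then (1 : ℝ) / 2 else 0) * (∑ x with V y x = v, μ x) / q| =
      (∑ y, ∑ v ∈ ({-1, 0, 1} : Finset ℤ), signDefect {x | V y x = v} μ (U y)) / q := by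
  simp only [signDefect, ← sub_div, abs_div, abs_of_nonneg hq, ← sum_div, filter_filter]
  rw [sum_comm, sum_comm (s := univ)]
  congr 1
  refine sum_congr rfl fun v _ => ?_
  rw [sum_comm]
  simp only [and_comm]

end SignDefect

section NonMalleable

lemma sum_sq_le_of_forall_le {Ω : Type*} [Fintype Ω] {μ : Ω → ℝ} (hμ0 : ∀ x, 0 ≤ μ x)
    (hμ1 : ∑ x, μ x = 1) {K : ℝ} (hK : ∀ x, μ x ≤ K) : ∑ x, μ x ^ 2 ≤ K := by
  calc
    ∑ x, μ x ^ 2 ≤ ∑ x, K * μ x := sum_le_sum fun x _ => by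
      rw [sq]
      exact mul_le_mul_of_nonneg_right (hK x) (hμ0 x)
    _ = K := by rw [← mul_sum, hμ1, mul_one]

variable {F : Type*} [Field F] [Fintype F] [DecidableEq F]

lemma sum_abs_sum_mul_quadraticChar_le (hq : Odd (Fintype.card F)) {μ : F → ℝ}
    (hμ0 : ∀ x, 0 ≤ μ x) (hμ1 : ∑ x, μ x = 1) {A : F → F} (hA : ∀ y, A y ≠ y) {w : ℝ}
    (hw0 : 0 ≤ w) (hw : ∀ x, √(Fintype.card F) * μ x ≤ w ^ 2) (n : ℕ) {c : ℝ} (hc0 : 0 ≤ c)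
    (hc : 2 + (6 * n + 10) * √(Fintype.card F) ≤ c ^ 2 * √(Fintype.card F)) :
    ∑ y, |∑ x, μ x * (quadraticChar F (x + y) * quadraticChar F (x + A y) ^ n)| ≤
      c * (Fintype.card F * w) := by
  set s := √(Fintype.card F)
  have s_pos : 0 < s := Real.sqrt_pos.2 (Nat.cast_pos.2 Fintype.card_pos)
  refine le_of_sq_le_sq ?_ (by positivity)
  calc
    _ ≤ (∑ x, μ x ^ 2) * (Fintype.card F ^ 2 * (2 + (6 * n + 10) * s)) :=
      sq_sum_abs_sum_mul_quadraticChar_le hq hA μ n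
    _ ≤ w ^ 2 / s * (Fintype.card F ^ 2 * (c ^ 2 * s)) := by
      gcongr
      exact sum_sq_le_of_forall_le hμ0 hμ1 fun x => (le_div_iff₀' s_pos).2 (hw x)
    _ = (c * (Fintype.card F * w)) ^ 2 := by field

lemma sum_filter_quadraticChar_add_eq_zero (μ : F → ℝ) (y : F) :
    ∑ x with quadraticChar F (x + y) = 0, μ x = μ (-y) := by
  simp only [quadraticChar_eq_zero_iff, ← eq_neg_iff_add_eq_zero, filter_eq', mem_univ, if_true,
    sum_singleton]

lemma sum_sum_signDefect_quadraticChar_le_add {μ : F → ℝ} (hμ0 : ∀ x, 0 ≤ μ x)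
    (hμ1 : ∑ x, μ x = 1) {K : ℝ} (hK : ∀ x, μ x ≤ K) (A : F → F) :
    ∑ y, ∑ v ∈ ({-1, 0, 1} : Finset ℤ), signDefect {x | quadraticChar F (x + A y) = v} μ
        (fun x => quadraticChar F (x + y)) ≤
      ∑ y, |∑ x, μ x * quadraticChar F (x + y)| +
        ∑ y, |∑ x, μ x * (quadraticChar F (x + y) * quadraticChar F (x + A y))| +
        2 + 2 * (Fintype.card F * K) := by
  have sum_neg : ∑ y, μ (-y) = 1 := (Equiv.sum_comp (Equiv.neg F) μ).trans hμ1
  have sum_neg_tampered_le : ∑ y, μ (-A y) ≤ Fintype.card F * K :=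
    (sum_le_card_nsmul _ _ K fun y _ => hK (-A y)).trans_eq (by simp)
  calc
    _ ≤ ∑ y, (|∑ x, μ x * quadraticChar F (x + y)| +
        |∑ x, μ x * (quadraticChar F (x + y) * quadraticChar F (x + A y))| +
        2 * μ (-y) + 2 * μ (-A y)) := by
      refine sum_le_sum fun y _ => ?_
      rw [← sum_filter_quadraticChar_add_eq_zero μ y,
        ← sum_filter_quadraticChar_add_eq_zero μ (A y)]
      exact sum_signDefect_le_abs_sum_mul_add hμ0 (fun x => quadraticChar_mem _)
        fun x => quadraticChar_mem _
    _ ≤ _ := by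
      rw [sum_add_distrib, sum_add_distrib, sum_add_distrib, ← mul_sum, ← mul_sum, sum_neg]
      linarith

lemma sum_sum_signDefect_quadraticChar_le_two_mul_card {μ : F → ℝ} (hμ0 : ∀ x, 0 ≤ μ x)
    (hμ1 : ∑ x, μ x = 1) (A : F → F) :
    ∑ y, ∑ v ∈ ({-1, 0, 1} : Finset ℤ), signDefect {x | quadraticChar F (x + A y) = v} μ
        (fun x => quadraticChar F (x + y)) ≤ 2 * Fintype.card F :=
  calc
    _ ≤ ∑ _y : F, (2 : ℝ) := sum_le_sum fun y _ =>
      (sum_signDefect_le_two_mul_sum hμ0 (fun x => quadraticChar_mem _)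
        fun x => quadraticChar_mem _).trans_eq (by rw [hμ1, mul_one])
    _ = 2 * Fintype.card F := by rw [sum_const, card_univ, nsmul_eq_mul, mul_comm]

lemma sum_sum_signDefect_quadraticChar_le (hq : Odd (Fintype.card F)) {μ : F → ℝ}
    (hμ0 : ∀ x, 0 ≤ μ x) (hμ1 : ∑ x, μ x = 1) {A : F → F} (hA : ∀ y, A y ≠ y) {w : ℝ}
    (hw0 : 0 ≤ w) (hw : ∀ x, √(Fintype.card F) * μ x ≤ w ^ 2) :
    ∑ y, ∑ v ∈ ({-1, 0, 1} : Finset ℤ), signDefect {x | quadraticChar F (x + A y) = v} μ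
        (fun x => quadraticChar F (x + y)) ≤ 8 * Fintype.card F * w := by
  rcases le_or_gt (1 / 4) w with w_large | w_small
  · have card_mul_le : (Fintype.card F : ℝ) * (1 / 4) ≤ Fintype.card F * w := by gcongr
    linarith [sum_sum_signDefect_quadraticChar_le_two_mul_card hμ0 hμ1 A]
  set s := √(Fintype.card F)
  have card_eq : (Fintype.card F : ℝ) = s ^ 2 := (Real.sq_sqrt (Nat.cast_nonneg _)).symm
  have s_pos : 0 < s := Real.sqrt_pos.2 (Nat.cast_pos.2 Fintype.card_pos)
  let K := w ^ 2 / s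
  have hK (x : F) : μ x ≤ K := (le_div_iff₀' s_pos).2 (hw x)
  have card_mul_K : Fintype.card F * K = s * w ^ 2 := by
    rw [card_eq]
    simp only [K]
    field
  have one_le : 1 ≤ s * w ^ 2 := by
    rw [← hμ1, ← card_mul_K]
    exact (sum_le_card_nsmul _ _ K fun x _ => hK x).trans_eq (by simp)
  have s_large : 16 ≤ s := by nlinarith
  have correlation_le :=
    sum_abs_sum_mul_quadraticChar_le hq hμ0 hμ1 hA hw0 hw 0 (c := 3.2) (by norm_num)
      (by norm_num; linarith)
  have tampered_correlation_le :=
    sum_abs_sum_mul_quadraticChar_le hq hμ0 hμ1 hA hw0 hw 1 (c := 4.1) (by norm_num)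
      (by norm_num; linarith)
  simp only [pow_zero, pow_one, mul_one] at correlation_le tampered_correlation_le
  refine (sum_sum_signDefect_quadraticChar_le_add hμ0 hμ1 hK A).trans ?_
  have remainder_le : 2 + 2 * (Fintype.card F * K) ≤ Fintype.card F * w / 2 := by
    rw [card_mul_K, card_eq]
    nlinarith [mul_le_mul_of_nonneg_left w_small.le (by positivity : 0 ≤ s * w),
      mul_le_mul_of_nonneg_left s_large (by positivity : 0 ≤ s * w)]
  linarith

end NonMalleable

/-- Let F be a finite field of odd order q and χ the quadratic character
of F (χ(x) = x^{(q-1)/2} ∈ {-1,0,1}, χ(0)=0). Define nmExt(x,y) = χ(x+y). Then for any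
source X on F with H∞(X) ≥ k, Y uniform on F independent of X, and any A : F → F with
A(y) ≠ y for all y, the distribution (χ(X+Y), χ(X+A(Y)), Y) is ε-close to
(U, χ(X+A(Y)), Y) with U a uniform sign independent of the rest, where
ε = 2·q^{1/4}·2^{1-k/2} = 4·q^{1/4}·2^{-k/2}. -/
theorem stmt_15 {F : Type*} [Field F] [Fintype F] [DecidableEq F]
    (hodd : Odd (Fintype.card F))
    (k : ℝ) (μ : F → ℝ) (hμ0 : ∀ x, 0 ≤ μ x) (hμ1 : ∑ x, μ x = 1)
    (hk : ∀ x, μ x ≤ (2 : ℝ) ^ (-k))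
    (A : F → F) (hA : ∀ y, A y ≠ y) :
    (∑ u ∈ ({-1, 0, 1} : Finset ℤ), ∑ v ∈ ({-1, 0, 1} : Finset ℤ), ∑ y : F,
        |(∑ x ∈ Finset.univ.filter
            (fun x : F => quadraticChar F (x + y) = u ∧ quadraticChar F (x + A y) = v),
              μ x) / (Fintype.card F : ℝ) -
          (if u = 1 ∨ u = -1 then (1 : ℝ) / 2 else 0) *
            (∑ x ∈ Finset.univ.filter (fun x : F => quadraticChar F (x + A y) = v),
              μ x) / (Fintype.card F : ℝ)|) / 2 ≤
      4 * (Fintype.card F : ℝ) ^ ((1 : ℝ)/4) * (2 : ℝ) ^ (-k / 2) := by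
  have q_pos : (0 : ℝ) < Fintype.card F := Nat.cast_pos.2 Fintype.card_pos
  let w : ℝ := (Fintype.card F : ℝ) ^ (1 / 4 : ℝ) * 2 ^ (-k / 2)
  have w_sq : w ^ 2 = √(Fintype.card F) * 2 ^ (-k) := by
    rw [mul_pow, ← Real.rpow_mul_natCast q_pos.le, ← Real.rpow_mul_natCast zero_le_two,
      Real.sqrt_eq_rpow]
    norm_num
  have defect_le := sum_sum_signDefect_quadraticChar_le hodd hμ0 hμ1 hA (w := w) (by positivity)
    fun x => w_sq ▸ mul_le_mul_of_nonneg_left (hk x) (Real.sqrt_nonneg _)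
  rw [sum_abs_div_sub_div_eq_sum_signDefect_div q_pos.le μ
    (fun y x => quadraticChar F (x + y)) fun y x => quadraticChar F (x + A y), div_div,
    div_le_iff₀ (by positivity)]
  linarith
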